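/- arXiv:2408.16488 — 2 statements merged into one kernel-verified Lean document; each statement's English description precedes it below -/
import Mathlib

section
/- Let σ be a permutation of 𝔽₃ × 𝔽₃. There exists g ∈ GL₃(ℂ) such that for every (i,j) ∈ 𝔽₃ × 𝔽₃ the vector g·t_{i,j} is a nonzero scalar multiple of t_{σ(i,j)}, if and only if σ is an affine transformation of 𝔽₃² whose linear part has determinant 1, i.e., there exist A ∈ SL₂(𝔽₃) and b ∈ 𝔽₃² with σ(v) = A·v + b for all v ∈ 𝔽₃². (Together with the triviality of the pointwise stabilizer, this yields a group isomorphism between the Hessian group — the setwise stabilizer of the nine flexes in PGL₃(ℂ), of order 216 — and the group SAff(𝔽₃²).) -/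
open MvPolynomial

/-- The nine flexes `t_{i,j}` of the Hesse configuration, indexed by `𝔽₃ × 𝔽₃`:
`t_{0,j} = (0, −εʲ, 1)`, `t_{1,j} = (1, 0, −εʲ)`, `t_{2,j} = (−εʲ, 1, 0)`. -/
noncomputable def tpt (ε : ℂ) (ij : ZMod 3 × ZMod 3) : Fin 3 → ℂ :=
  ![![0, -(ε ^ ij.2.val), 1], ![1, 0, -(ε ^ ij.2.val)], ![-(ε ^ ij.2.val), 1, 0]]
    ⟨ij.1.val, ZMod.val_lt ij.1⟩


/-- `g` induces `f`. -/
def Ind (ε : ℂ) (g : Matrix (Fin 3) (Fin 3) ℂ) (f : ZMod 3 × ZMod 3 → ZMod 3 × ZMod 3) : Prop :=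
  g.det ≠ 0 ∧ ∀ ij, ∃ c : ℂ, c ≠ 0 ∧ Matrix.mulVec g (tpt ε ij) = c • tpt ε (f ij)

lemma Ind.comp {ε : ℂ} {g g' f f'} (h : Ind ε g f) (h' : Ind ε g' f') :
    Ind ε (g * g') (f ∘ f') := by
  refine ⟨by rw [Matrix.det_mul]; exact mul_ne_zero h.1 h'.1, fun ij => ?_⟩
  obtain ⟨c, hc, e⟩ := h'.2 ij
  obtain ⟨d, hd, e'⟩ := h.2 (f' ij)
  refine ⟨c * d, mul_ne_zero hc hd, ?_⟩
  rw [← Matrix.mulVec_mulVec, e, Matrix.mulVec_smul, e', smul_smul]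
  rfl

lemma tpt0 (ε : ℂ) (j : ZMod 3) : tpt ε (0, j) = ![0, -(ε ^ j.val), 1] := rfl
lemma tpt1 (ε : ℂ) (j : ZMod 3) : tpt ε (1, j) = ![1, 0, -(ε ^ j.val)] := rfl
lemma tpt2 (ε : ℂ) (j : ZMod 3) : tpt ε (2, j) = ![-(ε ^ j.val), 1, 0] := rfl

lemma zcases (i : ZMod 3) : i = 0 ∨ i = 1 ∨ i = 2 := by
  revert i; decide

lemma eadd {ε : ℂ} (hε : IsPrimitiveRoot ε 3) (a b : ZMod 3) :
    ε ^ (a + b).val = ε ^ a.val * ε ^ b.val := by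
  have := pow_mod_orderOf ε (a.val + b.val)
  rw [← hε.eq_orderOf] at this
  rw [← pow_add, ZMod.val_add, this]

lemma einj {ε : ℂ} (hε : IsPrimitiveRoot ε 3) {a b : ZMod 3} (h : ε ^ a.val = ε ^ b.val) :
    a = b :=
  ZMod.val_injective 3 (hε.pow_inj (ZMod.val_lt a) (ZMod.val_lt b) h)

lemma eone {ε : ℂ} (hε : IsPrimitiveRoot ε 3) {a : ZMod 3} (h : ε ^ a.val = 1) : a = 0 :=
  einj hε (by simpa using h)

lemma quad {ε : ℂ} (hε : IsPrimitiveRoot ε 3) : ε ^ 2 + ε + 1 = 0 := by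
  have h1 : ε ^ 3 = 1 := hε.pow_eq_one
  have h2 : ε ≠ 1 := hε.ne_one (by norm_num)
  have : (ε - 1) * (ε ^ 2 + ε + 1) = 0 := by linear_combination h1
  exact (mul_eq_zero.1 this).resolve_left (sub_ne_zero.2 h2)

lemma indDiag {ε : ℂ} (hε : IsPrimitiveRoot ε 3) (x y z : ZMod 3)
    (f : ZMod 3 × ZMod 3 → ZMod 3 × ZMod 3)
    (h0 : ∀ j, f (0, j) = (0, j + y - z)) (h1 : ∀ j, f (1, j) = (1, j + z - x))
    (h2 : ∀ j, f (2, j) = (2, j + x - y)) :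
    Ind ε !![ε ^ x.val, 0, 0; 0, ε ^ y.val, 0; 0, 0, ε ^ z.val] f := by
  have h : ε ≠ 0 := hε.ne_zero (by norm_num)
  have key : ∀ a b : ZMod 3, ε ^ a.val = ε ^ b.val * ε ^ (a - b).val := fun a b => by
    rw [← eadd hε]; congr 2; ring
  refine ⟨by simp [Matrix.det_fin_three, h], ?_⟩
  rintro ⟨i, j⟩
  rcases zcases i with rfl | rfl | rfl
  · refine ⟨ε ^ z.val, pow_ne_zero _ h, ?_⟩
    rw [h0, tpt0, tpt0]
    ext k; fin_cases k <;> simp [Matrix.mulVec, dotProduct, Fin.sum_univ_three]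
    rw [← eadd hε, ← eadd hε]; congr 2; ring
  · refine ⟨ε ^ x.val, pow_ne_zero _ h, ?_⟩
    rw [h1, tpt1, tpt1]
    ext k; fin_cases k <;> simp [Matrix.mulVec, dotProduct, Fin.sum_univ_three]
    rw [← eadd hε, ← eadd hε]; congr 2; ring
  · refine ⟨ε ^ y.val, pow_ne_zero _ h, ?_⟩
    rw [h2, tpt2, tpt2]
    ext k; fin_cases k <;> simp [Matrix.mulVec, dotProduct, Fin.sum_univ_three]
    rw [← eadd hε, ← eadd hε]; congr 2; ring

lemma indTransJ {ε : ℂ} (hε : IsPrimitiveRoot ε 3) (k : ZMod 3) :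
    ∃ g, Ind ε g (fun v => (v.1, v.2 + k)) :=
  ⟨_, indDiag hε 0 (-k) k _ (by revert k; decide) (by revert k; decide)
    (by revert k; decide)⟩

lemma indShear {ε : ℂ} (hε : IsPrimitiveRoot ε 3) (k : ZMod 3) :
    ∃ g, Ind ε g (fun v => (v.1, v.2 + k * v.1)) :=
  ⟨_, indDiag hε 0 k k _ (by revert k; decide) (by revert k; decide)
    (by revert k; decide)⟩

lemma indTransI1 (ε : ℂ) : Ind ε !![0, 0, 1; 1, 0, 0; 0, 1, 0] (fun v => (v.1 + 1, v.2)) := by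
  refine ⟨by simp [Matrix.det_fin_three], ?_⟩
  rintro ⟨i, j⟩
  refine ⟨1, one_ne_zero, ?_⟩
  have e1 : (0 + 1 : ZMod 3) = 1 := by decide
  have e2 : (1 + 1 : ZMod 3) = 2 := by decide
  have e3 : (2 + 1 : ZMod 3) = 0 := by decide
  rcases zcases i with rfl | rfl | rfl
  · simp only [e1, tpt0, tpt1]
    ext k; fin_cases k <;> simp [Matrix.mulVec, dotProduct, Fin.sum_univ_three]
  · simp only [e2, tpt1, tpt2]
    ext k; fin_cases k <;> simp [Matrix.mulVec, dotProduct, Fin.sum_univ_three]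
  · simp only [e3, tpt0, tpt2]
    ext k; fin_cases k <;> simp [Matrix.mulVec, dotProduct, Fin.sum_univ_three]

lemma indTransI {ε : ℂ} (hε : IsPrimitiveRoot ε 3) (k : ZMod 3) :
    ∃ g, Ind ε g (fun v => (v.1 + k, v.2)) := by
  rcases zcases k with rfl | rfl | rfl
  · obtain ⟨g, hg⟩ := indTransJ hε 0
    exact ⟨g, by simpa using hg⟩
  · exact ⟨_, indTransI1 ε⟩
  · have := (indTransI1 ε).comp (indTransI1 ε)
    refine ⟨_, Eq.mp (congrArg (Ind ε _) ?_) this⟩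
    ext v <;> revert v <;> decide

lemma indF {ε : ℂ} (hε : IsPrimitiveRoot ε 3) :
    Ind ε !![1, 1, 1; 1, ε, ε ^ 2; 1, ε ^ 2, ε] (fun v => (v.2, -v.1)) := by
  have h : ε ≠ 0 := hε.ne_zero (by norm_num)
  have h1 : ε ≠ 1 := hε.ne_one (by norm_num)
  have hq := quad hε
  have h3 : ε ^ 3 = 1 := hε.pow_eq_one
  have h4 : ε ^ 2 - ε ≠ 0 := by
    have : ε ^ 2 - ε = ε * (ε - 1) := by ring
    rw [this]; exact mul_ne_zero h (sub_ne_zero.2 h1)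
  have h5 : 1 - ε ≠ 0 := sub_ne_zero.2 h1.symm
  have h6 : 1 - ε ^ 2 ≠ 0 := by
    intro h7
    have : (ε ^ 2 - ε) * ε = 0 := by linear_combination h3 + h7
    exact mul_ne_zero h4 h this
  have v1 : (1 : ZMod 3).val = 1 := rfl
  have v2 : (2 : ZMod 3).val = 2 := rfl
  have n1 : (-1 : ZMod 3) = 2 := by decide
  have n2 : (-2 : ZMod 3) = 1 := by decide
  have n0 : (-0 : ZMod 3) = 0 := by decide
  refine ⟨?_, ?_⟩
  · have : Matrix.det !![1, 1, 1; 1, ε, ε ^ 2; 1, ε ^ 2, ε] = 3 * (ε ^ 2 - ε) := by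
      simp [Matrix.det_fin_three]
      linear_combination (-ε) * h3
    rw [this]; exact mul_ne_zero (by norm_num) h4
  rintro ⟨i, j⟩
  rcases zcases i with rfl | rfl | rfl <;> rcases zcases j with rfl | rfl | rfl
  all_goals simp only [n0, n1, n2, tpt0, tpt1, tpt2, v1, v2, ZMod.val_zero, pow_zero, pow_one]
  · refine ⟨ε - ε ^ 2, by rw [← neg_sub]; exact neg_ne_zero.2 h4, ?_⟩
    ext k; fin_cases k <;> simp [Matrix.mulVec, dotProduct, Fin.sum_univ_three] <;> grind
  · refine ⟨1 - ε, h5, ?_⟩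
    ext k; fin_cases k <;> simp [Matrix.mulVec, dotProduct, Fin.sum_univ_three] <;> grind
  · refine ⟨ε ^ 2 - 1, by rw [← neg_sub]; exact neg_ne_zero.2 h6, ?_⟩
    ext k; fin_cases k <;> simp [Matrix.mulVec, dotProduct, Fin.sum_univ_three] <;> grind
  · refine ⟨1 - ε, h5, ?_⟩
    ext k; fin_cases k <;> simp [Matrix.mulVec, dotProduct, Fin.sum_univ_three] <;> grind
  · refine ⟨1 - ε, h5, ?_⟩
    ext k; fin_cases k <;> simp [Matrix.mulVec, dotProduct, Fin.sum_univ_three] <;> grind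
  · refine ⟨1 - ε, h5, ?_⟩
    ext k; fin_cases k <;> simp [Matrix.mulVec, dotProduct, Fin.sum_univ_three] <;> grind
  · refine ⟨ε ^ 2 - 1, by rw [← neg_sub]; exact neg_ne_zero.2 h6, ?_⟩
    ext k; fin_cases k <;> simp [Matrix.mulVec, dotProduct, Fin.sum_univ_three] <;> grind
  · refine ⟨1 - ε, h5, ?_⟩
    ext k; fin_cases k <;> simp [Matrix.mulVec, dotProduct, Fin.sum_univ_three] <;> grind
  · refine ⟨ε - ε ^ 2, by rw [← neg_sub]; exact neg_ne_zero.2 h4, ?_⟩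
    ext k; fin_cases k <;> simp [Matrix.mulVec, dotProduct, Fin.sum_univ_three] <;> grind

lemma words : ∀ p q s t : ZMod 3, p * t - q * s = 1 → ∃ a b c d : ZMod 3,
    (d * (c * (b * a - 1) - a) - (b * a - 1) = p ∧ d * (c * b - 1) - b = q) ∧
      -(c * (b * a - 1) - a) = s ∧ -(c * b - 1) = t := by
  decide

lemma indAff {ε : ℂ} (hε : IsPrimitiveRoot ε 3) (p q r s t u : ZMod 3)
    (h : p * t - q * s = 1) :
    ∃ g, Ind ε g (fun v => (p * v.1 + q * v.2 + r, s * v.1 + t * v.2 + u)) := by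
  obtain ⟨a, b, c, d, ⟨h1, h2⟩, h3, h4⟩ := words p q s t h
  obtain ⟨ga, ha⟩ := indShear hε a
  obtain ⟨gb, hb⟩ := indShear hε b
  obtain ⟨gc, hc⟩ := indShear hε c
  obtain ⟨gd, hd⟩ := indShear hε d
  obtain ⟨gr, hr⟩ := indTransI hε r
  obtain ⟨gu, hu⟩ := indTransJ hε u
  have hF := indF hε
  have := hr.comp (hu.comp (hF.comp (hd.comp (hF.comp (hc.comp (hF.comp (hb.comp (hF.comp ha))))))))
  refine ⟨_, Eq.mp (congrArg (Ind ε _) ?_) this⟩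
  ext v
  · simp only [Function.comp, ← h1, ← h2]; ring
  · simp only [Function.comp, ← h3, ← h4]; ring

/-- The bracket. -/
noncomputable def brk (ε : ℂ) (u v w : ZMod 3 × ZMod 3) : ℂ :=
  Matrix.det (Matrix.of ![tpt ε u, tpt ε v, tpt ε w])

lemma brk_zero {ε : ℂ} (hε : IsPrimitiveRoot ε 3) (u v w : ZMod 3 × ZMod 3)
    (h : u + v + w = 0) : brk ε u v w = 0 := by
  have hw : w = (-u.1 - v.1, -u.2 - v.2) := by
    ext
    · have := congrArg Prod.fst h
      simp at this; simp; linear_combination this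
    · have := congrArg Prod.snd h
      simp at this; simp; linear_combination this
  obtain ⟨i, a⟩ := u
  obtain ⟨j, b⟩ := v
  subst hw
  have key : ε ^ a.val * ε ^ b.val * ε ^ (-a - b).val = 1 := by
    rw [← eadd hε, ← eadd hε]; simp
  simp only
  generalize (-a - b) = c at *
  rcases zcases i with rfl | rfl | rfl <;> rcases zcases j with rfl | rfl | rfl
  all_goals
    first
    | rw [show (-0 - 0 : ZMod 3) = 0 by decide]
    | rw [show (-0 - 1 : ZMod 3) = 2 by decide]
    | rw [show (-0 - 2 : ZMod 3) = 1 by decide]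
    | rw [show (-1 - 0 : ZMod 3) = 2 by decide]
    | rw [show (-1 - 1 : ZMod 3) = 1 by decide]
    | rw [show (-1 - 2 : ZMod 3) = 0 by decide]
    | rw [show (-2 - 0 : ZMod 3) = 1 by decide]
    | rw [show (-2 - 1 : ZMod 3) = 0 by decide]
    | rw [show (-2 - 2 : ZMod 3) = 2 by decide]
    simp only [brk, tpt0, tpt1, tpt2, Matrix.det_fin_three]
    simp
  all_goals grind

lemma brk_ne {ε : ℂ} (hε : IsPrimitiveRoot ε 3) (u v w : ZMod 3 × ZMod 3)
    (huv : u ≠ v) (huw : u ≠ w) (hvw : v ≠ w) (h : brk ε u v w = 0) : u + v + w = 0 := by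
  obtain ⟨i, a⟩ := u
  obtain ⟨j, b⟩ := v
  obtain ⟨k, c⟩ := w
  have k0 : ∀ a b c : ZMod 3, a ≠ b → a ≠ c → b ≠ c → a + b + c = 0 := by decide
  have k1 : ε ^ a.val * ε ^ b.val * ε ^ c.val = 1 → a + b + c = 0 := fun h => by
    rw [← eadd hε, ← eadd hε] at h; exact eone hε h
  have k2 : ε ^ a.val = ε ^ b.val → a = b := einj hε
  have k3 : ε ^ a.val = ε ^ c.val → a = c := einj hε
  have k4 : ε ^ b.val = ε ^ c.val → b = c := einj hε
  have k5 := k0 a b c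
  clear k0
  have h0 : ε ≠ 0 := hε.ne_zero (by norm_num)
  have ha : ε ^ a.val ≠ 0 := pow_ne_zero _ h0
  have hb : ε ^ b.val ≠ 0 := pow_ne_zero _ h0
  have hc : ε ^ c.val ≠ 0 := pow_ne_zero _ h0
  rcases zcases i with rfl | rfl | rfl <;> rcases zcases j with rfl | rfl | rfl <;>
    rcases zcases k with rfl | rfl | rfl
  all_goals
    simp only [brk, tpt0, tpt1, tpt2, Matrix.det_fin_three] at h
    simp only [Matrix.of_apply, Matrix.cons_val] at h
  all_goals
    first
    | (refine Prod.ext ?_ (k5 (fun e => huv (Prod.ext rfl e)) (fun e => huw (Prod.ext rfl e))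
        (fun e => hvw (Prod.ext rfl e))); rfl)
    | (refine Prod.ext ?_ (k1 ?_) <;> [rfl; linear_combination h])
    | (refine Prod.ext ?_ (k1 ?_) <;> [rfl; linear_combination -h])
    | (refine (huv (Prod.ext rfl (k2 ?_))).elim; linear_combination h)
    | (refine (huv (Prod.ext rfl (k2 (mul_left_cancel₀ hc ?_)))).elim; linear_combination h)
    | (refine (huv (Prod.ext rfl (k2 ?_))).elim; linear_combination -h)
    | (refine (huv (Prod.ext rfl (k2 (mul_left_cancel₀ hc ?_)))).elim; linear_combination -h)
    | (refine (huw (Prod.ext rfl (k3 ?_))).elim; linear_combination h)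
    | (refine (huw (Prod.ext rfl (k3 (mul_left_cancel₀ hb ?_)))).elim; linear_combination h)
    | (refine (huw (Prod.ext rfl (k3 ?_))).elim; linear_combination -h)
    | (refine (huw (Prod.ext rfl (k3 (mul_left_cancel₀ hb ?_)))).elim; linear_combination -h)
    | (refine (hvw (Prod.ext rfl (k4 ?_))).elim; linear_combination h)
    | (refine (hvw (Prod.ext rfl (k4 (mul_left_cancel₀ ha ?_)))).elim; linear_combination h)
    | (refine (hvw (Prod.ext rfl (k4 ?_))).elim; linear_combination -h)
    | (refine (hvw (Prod.ext rfl (k4 (mul_left_cancel₀ ha ?_)))).elim; linear_combination -h)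

lemma third {ε : ℂ} (hε : IsPrimitiveRoot ε 3) {g} {σ : Equiv.Perm (ZMod 3 × ZMod 3)}
    (hg : Ind ε g σ) (u v w : ZMod 3 × ZMod 3) (huv : u ≠ v) (huw : u ≠ w) (hvw : v ≠ w)
    (h : u + v + w = 0) : σ u + σ v + σ w = 0 := by
  apply brk_ne hε _ _ _ (by simpa) (by simpa) (by simpa)
  obtain ⟨a, ha, ea⟩ := hg.2 u
  obtain ⟨b, hb, eb⟩ := hg.2 v
  obtain ⟨c, hc, ec⟩ := hg.2 w
  have h0 := brk_zero hε u v w h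
  have : Matrix.of ![tpt ε u, tpt ε v, tpt ε w] * g.transpose
      = Matrix.diagonal ![a, b, c] * Matrix.of ![tpt ε (σ u), tpt ε (σ v), tpt ε (σ w)] := by
    ext i j
    rw [Matrix.diagonal_mul]
    have ea' := congrFun ea j
    have eb' := congrFun eb j
    have ec' := congrFun ec j
    simp only [Matrix.mulVec, dotProduct, Fin.sum_univ_three, Pi.smul_apply, smul_eq_mul]
      at ea' eb' ec'
    fin_cases i <;> simp [Matrix.mul_apply, Fin.sum_univ_three]
    · linear_combination ea'
    · linear_combination eb'
    · linear_combination ec'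
  have := congrArg Matrix.det this
  rw [Matrix.det_mul, Matrix.det_mul, Matrix.det_diagonal] at this
  unfold brk at h0 ⊢
  rw [h0, zero_mul] at this
  simp [Fin.prod_univ_three, ha, hb, hc] at this
  exact this

lemma noRefl {ε : ℂ} (hε : IsPrimitiveRoot ε 3) (g) (h : Ind ε g (fun v => (v.1, -v.2))) :
    False := by
  obtain ⟨c0, h0, e0⟩ := h.2 (0, 0)
  obtain ⟨c1, -, e1⟩ := h.2 (1, 0)
  obtain ⟨c2, -, e2⟩ := h.2 (2, 0)
  obtain ⟨c3, -, e3⟩ := h.2 (0, 1)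
  obtain ⟨c4, -, e4⟩ := h.2 (0, 2)
  obtain ⟨c5, -, e5⟩ := h.2 (1, 1)
  have h' : ε ≠ 0 := hε.ne_zero (by norm_num)
  have h1 : ε ≠ 1 := hε.ne_one (by norm_num)
  have hq := quad hε
  have v1 : (1 : ZMod 3).val = 1 := rfl
  have v2 : (2 : ZMod 3).val = 2 := rfl
  have n1 : (-1 : ZMod 3) = 2 := by decide
  have n2 : (-2 : ZMod 3) = 1 := by decide
  have n0 : (-0 : ZMod 3) = 0 := by decide
  simp only [n0, n1, n2, tpt0, tpt1, tpt2, v1, v2, ZMod.val_zero, pow_zero, pow_one] at *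
  have E0 := fun k => congrFun e0 k
  have E1 := fun k => congrFun e1 k
  have E2 := fun k => congrFun e2 k
  have E3 := fun k => congrFun e3 k
  have E4 := fun k => congrFun e4 k
  have E5 := congrFun e5 1
  simp only [Matrix.mulVec, dotProduct, Fin.sum_univ_three, Pi.smul_apply, smul_eq_mul] at E0 E1 E2 E3 E4 E5
  have A1 := E0 1
  have A2 := E0 2
  have B1 := E1 1
  have C1 := E3 1
  have C2 := E3 2
  have D1 := E4 1
  have D2 := E4 2
  clear E0 E1 E2 E3 E4 e0 e1 e2 e3 e4 e5
  simp at A1 A2 B1 C1 C2 D1 D2 E5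
  have h3 : ε ^ 3 = 1 := hε.pow_eq_one
  have q0 : g 1 2 = 0 := by
    have : (1 - ε) * g 1 2 = 0 := by linear_combination E5 - B1
    exact (mul_eq_zero.1 this).resolve_left (sub_ne_zero.2 h1.symm)
  have q1 : g 1 1 = c0 := by linear_combination q0 - A1
  have q3 : c3 * ε = c0 := mul_right_cancel₀ h' (by linear_combination C1 - q0 + ε * q1)
  have q4 : c4 = c0 * ε := mul_right_cancel₀ h' (by linear_combination D1 - q0 + ε ^ 2 * q1)
  have q5 : c0 + ε * c3 + ε ^ 2 * c4 = 0 := by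
    linear_combination -A2 - ε * C2 - ε ^ 2 * D2 + (g 2 2 - g 2 1 * (ε ^ 2 - ε + 1)) * hq
  have : 3 * c0 = 0 := by
    linear_combination q5 - q3 - ε ^ 2 * q4 - c0 * h3
  exact h0 (by simpa using this)

lemma aff1 (f : ZMod 3 × ZMod 3 → ZMod 3)
    (h : ∀ u v w, u ≠ v → u ≠ w → v ≠ w → u + v + w = 0 → f u + f v + f w = 0) (v) :
    f v = (f (1, 0) - f (0, 0)) * v.1 + (f (0, 1) - f (0, 0)) * v.2 + f (0, 0) := by
  have a1 := h (0, 0) (1, 0) (2, 0) (by decide) (by decide) (by decide) (by decide)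
  have a2 := h (0, 0) (0, 1) (0, 2) (by decide) (by decide) (by decide) (by decide)
  have a3 := h (1, 0) (0, 1) (2, 2) (by decide) (by decide) (by decide) (by decide)
  have a4 := h (0, 0) (2, 2) (1, 1) (by decide) (by decide) (by decide) (by decide)
  have a5 := h (1, 0) (1, 1) (1, 2) (by decide) (by decide) (by decide) (by decide)
  have a6 := h (2, 0) (2, 2) (2, 1) (by decide) (by decide) (by decide) (by decide)
  have k : ∀ x y z : ZMod 3, x + y + z = 0 → z = -x - y := by decide
  have b1 := k _ _ _ a1
  have b2 := k _ _ _ a2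
  have b3 := k _ _ _ a3
  have b4 := k _ _ _ a4
  have b5 := k _ _ _ a5
  have b6 := k _ _ _ a6
  rw [b4, b3] at b5
  rw [b1, b3] at b6
  rw [b3] at b4
  clear a1 a2 a3 a4 a5 a6 h k
  obtain ⟨i, j⟩ := v
  rcases zcases i with rfl | rfl | rfl <;> rcases zcases j with rfl | rfl | rfl <;>
    simp only [b1, b2, b3, b4, b5, b6] <;>
    generalize f (0, 0) = r <;> generalize f (1, 0) = p <;> generalize f (0, 1) = q <;>
    clear b1 b2 b3 b4 b5 b6 <;> revert p q r <;> decide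

lemma affineForm (σ : ZMod 3 × ZMod 3 → ZMod 3 × ZMod 3)
    (h : ∀ u v w, u ≠ v → u ≠ w → v ≠ w → u + v + w = 0 → σ u + σ v + σ w = 0) (v) :
    σ v = (((σ (1, 0)).1 - (σ (0, 0)).1) * v.1 + ((σ (0, 1)).1 - (σ (0, 0)).1) * v.2
        + (σ (0, 0)).1,
      ((σ (1, 0)).2 - (σ (0, 0)).2) * v.1 + ((σ (0, 1)).2 - (σ (0, 0)).2) * v.2
        + (σ (0, 0)).2) := by
  ext
  · exact aff1 (fun v => (σ v).1)
      (fun u v w h1 h2 h3 h4 => congrArg Prod.fst (h u v w h1 h2 h3 h4)) v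
  · exact aff1 (fun v => (σ v).2)
      (fun u v w h1 h2 h3 h4 => congrArg Prod.snd (h u v w h1 h2 h3 h4)) v

theorem flex_permutation_induced_iff_saff (ε : ℂ) (hε : IsPrimitiveRoot ε 3)
    (σ : Equiv.Perm (ZMod 3 × ZMod 3)) :
    (∃ g : Matrix.GeneralLinearGroup (Fin 3) ℂ, ∀ ij : ZMod 3 × ZMod 3, ∃ c : ℂ, c ≠ 0 ∧
        Matrix.mulVec (g : Matrix (Fin 3) (Fin 3) ℂ) (tpt ε ij) = c • tpt ε (σ ij)) ↔
      ∃ (A : Matrix.SpecialLinearGroup (Fin 2) (ZMod 3)) (b : ZMod 3 × ZMod 3),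
        ∀ v : ZMod 3 × ZMod 3,
          σ v = (Matrix.mulVec A.1 ![v.1, v.2] 0 + b.1,
                 Matrix.mulVec A.1 ![v.1, v.2] 1 + b.2) := by
  constructor
  · rintro ⟨g, hg⟩
    have hI : Ind ε g.1 σ :=
      ⟨((Matrix.isUnit_iff_isUnit_det _).1 g.isUnit).ne_zero, hg⟩
    have hf := affineForm σ (third hε hI)
    generalize (σ (1, 0)).1 - (σ (0, 0)).1 = p at hf
    generalize (σ (0, 1)).1 - (σ (0, 0)).1 = q at hf
    generalize (σ (1, 0)).2 - (σ (0, 0)).2 = s at hf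
    generalize (σ (0, 1)).2 - (σ (0, 0)).2 = t at hf
    generalize (σ (0, 0)).1 = r at hf
    generalize (σ (0, 0)).2 = u at hf
    rcases zcases (p * t - q * s) with hd | hd | hd
    · exfalso
      have : ∀ p q s t : ZMod 3, p * t - q * s = 0 → ∃ x y : ZMod 3, (x, y) ≠ 0 ∧
        p * x + q * y = 0 ∧ s * x + t * y = 0 := by decide
      obtain ⟨x, y, hne, e1, e2⟩ := this p q s t hd
      apply hne
      apply σ.injective
      rw [hf, hf]
      simp [e1, e2]
    · refine ⟨⟨!![p, q; s, t], by simpa [Matrix.det_fin_two] using hd⟩, (r, u), fun v => ?_⟩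
      rw [hf]
      simp [Matrix.mulVec, dotProduct]
    · exfalso
      have t3 : (3 : ZMod 3) = 0 := by decide
      obtain ⟨g', hg'⟩ := indAff hε (-t) q (t * r - q * u) (-s) p (s * r - p * u)
        (by linear_combination -hd - t3)
      have := hg'.comp hI
      refine noRefl hε _ (Eq.mp (congrArg (Ind ε _) ?_) this)
      ext v
      · simp only [Function.comp, hf]
        linear_combination -hd * v.1 - t3 * v.1
      · simp only [Function.comp, hf]
        linear_combination hd * v.2 + t3 * v.2
  · rintro ⟨A, b, h⟩
    obtain ⟨g, hg⟩ := indAff hε (A.1 0 0) (A.1 0 1) b.1 (A.1 1 0) (A.1 1 1) b.2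
      (by rw [← Matrix.det_fin_two]; exact A.2)
    refine ⟨Matrix.GeneralLinearGroup.mkOfDetNeZero g hg.1, fun ij => ?_⟩
    obtain ⟨c, hc, e⟩ := hg.2 ij
    refine ⟨c, hc, ?_⟩
    rw [h]
    simpa [Matrix.mulVec, dotProduct, Fin.sum_univ_two] using e
end

section
/- For g ∈ GL₃(ℂ), the following are equivalent: (i) g permutes the nine points projectively, i.e., for every (i,j) ∈ 𝔽₃ × 𝔽₃ there exist (k,m) ∈ 𝔽₃ × 𝔽₃ and c ∈ ℂ* with g·t_{i,j} = c·t_{k,m}; (ii) the substitution map f ↦ f∘g maps the Hesse pencil L into itself. (This is the equality N_{PGL₃}(𝓕) = N_{PGL₃}(ℓ) of normalizers defining the Hessian group.) -/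
open MvPolynomial

/-- The Hesse pencil of cubic forms `{α(x₀³+x₁³+x₂³) + β·x₀x₁x₂}`. -/
def hessePencil : Set (MvPolynomial (Fin 3) ℂ) :=
  {f | ∃ α β : ℂ,
    f = C α * ((X 0) ^ 3 + (X 1) ^ 3 + (X 2) ^ 3) + C β * (X 0 * X 1 * X 2)}

/-- The linear substitution `f ∘ g`, i.e. `x_i ↦ Σ_j g_{ij} x_j`, so that
`(f∘g)(v) = f(g·v)`. -/
noncomputable def substGL (g : Matrix.GeneralLinearGroup (Fin 3) ℂ)
    (f : MvPolynomial (Fin 3) ℂ) : MvPolynomial (Fin 3) ℂ :=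
  aeval (fun i : Fin 3 => ∑ j : Fin 3, C ((g : Matrix (Fin 3) (Fin 3) ℂ) i j) * X j) f

noncomputable def cub (a : Fin 10 → ℂ) : MvPolynomial (Fin 3) ℂ :=
  C (a 0) * X 0 ^ 3 + C (a 1) * X 1 ^ 3 + C (a 2) * X 2 ^ 3
  + C (a 3) * (X 0 ^ 2 * X 1) + C (a 4) * (X 0 ^ 2 * X 2) + C (a 5) * (X 1 ^ 2 * X 0)
  + C (a 6) * (X 1 ^ 2 * X 2) + C (a 7) * (X 2 ^ 2 * X 0) + C (a 8) * (X 2 ^ 2 * X 1)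
  + C (a 9) * (X 0 * X 1 * X 2)

lemma cub_add (a b : Fin 10 → ℂ) : cub a + cub b = cub (a + b) := by
  simp only [cub, Pi.add_apply, C_add]; ring

lemma cub_smul (c : ℂ) (b : Fin 10 → ℂ) : C c * cub b = cub (c • b) := by
  simp only [cub, Pi.smul_apply, smul_eq_mul, C_mul]; ring

lemma cub_prod (p q r : Fin 3 → ℂ) :
    (∑ j, C (p j) * X j) * (∑ j, C (q j) * X j) * (∑ j, C (r j) * X j) =
    cub ![p 0 * q 0 * r 0, p 1 * q 1 * r 1, p 2 * q 2 * r 2,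
      p 0 * q 0 * r 1 + p 0 * q 1 * r 0 + p 1 * q 0 * r 0,
      p 0 * q 0 * r 2 + p 0 * q 2 * r 0 + p 2 * q 0 * r 0,
      p 1 * q 1 * r 0 + p 1 * q 0 * r 1 + p 0 * q 1 * r 1,
      p 1 * q 1 * r 2 + p 1 * q 2 * r 1 + p 2 * q 1 * r 1,
      p 2 * q 2 * r 0 + p 2 * q 0 * r 2 + p 0 * q 2 * r 2,
      p 2 * q 2 * r 1 + p 2 * q 1 * r 2 + p 1 * q 2 * r 2,
      p 0 * q 1 * r 2 + p 0 * q 2 * r 1 + p 1 * q 0 * r 2 + p 1 * q 2 * r 0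
        + p 2 * q 0 * r 1 + p 2 * q 1 * r 0] := by
  simp [cub, Fin.sum_univ_three, C_add, C_mul]; ring

lemma eval_substGL (g : Matrix.GeneralLinearGroup (Fin 3) ℂ) (f : MvPolynomial (Fin 3) ℂ)
    (v : Fin 3 → ℂ) :
    eval v (substGL g f) = eval (Matrix.mulVec (g : Matrix (Fin 3) (Fin 3) ℂ) v) f := by
  unfold substGL
  induction f using MvPolynomial.induction_on with
  | C a => simp
  | add p q hp hq => simp only [map_add, hp, hq]
  | mul_X p i hp =>
    simp only [map_mul, hp, aeval_X, eval_X]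
    simp [Matrix.mulVec, dotProduct]

lemma subst_cub (g : Matrix.GeneralLinearGroup (Fin 3) ℂ) (f : MvPolynomial (Fin 3) ℂ)
    (hf : f ∈ hessePencil) : ∃ a, substGL g f = cub a := by
  obtain ⟨α, β, rfl⟩ := hf
  unfold substGL
  simp only [map_add, map_mul, map_pow, aeval_X, algHom_C, algebraMap_eq, pow_three', cub_prod,
    cub_add, cub_smul]
  exact ⟨_, rfl⟩

lemma eps_rel (ε : ℂ) (hε : IsPrimitiveRoot ε 3) : ε ^ 2 + ε + 1 = 0 := by
  have h1 : ε ≠ 1 := hε.ne_one (by norm_num)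
  have h3 := hε.pow_eq_one
  have : (ε - 1) * (ε ^ 2 + ε + 1) = 0 := by linear_combination h3
  exact (mul_eq_zero.1 this).resolve_left (sub_ne_zero.2 h1)

/-- values of `A - B ε^j + D ε^(2j)` zero -/
lemma vander (ε : ℂ) (hε : IsPrimitiveRoot ε 3) (A B D : ℂ)
    (h : ∀ j : ZMod 3, A - B * ε ^ j.val + D * (ε ^ j.val) ^ 2 = 0) : A = 0 ∧ B = 0 ∧ D = 0 := by
  have hr := eps_rel ε hε
  have h0 : A - B * ε ^ 0 + D * (ε ^ 0) ^ 2 = 0 := h 0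
  have h1 : A - B * ε ^ 1 + D * (ε ^ 1) ^ 2 = 0 := h 1
  have h2 : A - B * ε ^ 2 + D * (ε ^ 2) ^ 2 = 0 := h 2
  have hA : A = 0 := by
    linear_combination (1 / 3) * (h0 + h1 + h2) + (1 / 3) * (B - D * (ε ^ 2 - ε + 1)) * hr
  subst hA
  have hBD : B = D := by linear_combination -h0
  subst hBD
  have hB : B * (ε * (ε - 1)) = 0 := by linear_combination h1
  have h1' : ε ≠ 1 := hε.ne_one (by norm_num)
  have h0' : ε ≠ 0 := hε.ne_zero (by norm_num)
  have := (mul_eq_zero.1 hB).resolve_right (mul_ne_zero h0' (sub_ne_zero.2 h1'))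
  exact ⟨rfl, this, this⟩

lemma cube_pow (ε : ℂ) (hε : IsPrimitiveRoot ε 3) (j : ℕ) : (ε ^ j) ^ 3 = 1 := by
  rw [← pow_mul, mul_comm, pow_mul, hε.pow_eq_one, one_pow]

lemma cub_mem (ε : ℂ) (hε : IsPrimitiveRoot ε 3) (a : Fin 10 → ℂ)
    (h : ∀ ij, eval (tpt ε ij) (cub a) = 0) : cub a ∈ hessePencil := by
  obtain ⟨e1, e2, e3⟩ := vander ε hε (a 2 - a 1) (a 8) (a 6) (fun j => by
    have := h (0, j)
    rw [tpt0] at this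
    simp [cub] at this
    linear_combination this + a 1 * cube_pow ε hε j.val)
  obtain ⟨f1, f2, f3⟩ := vander ε hε (a 0 - a 2) (a 4) (a 7) (fun j => by
    have := h (1, j)
    rw [tpt1] at this
    simp [cub] at this
    linear_combination this + a 2 * cube_pow ε hε j.val)
  obtain ⟨g1, g2, g3⟩ := vander ε hε (a 1 - a 0) (a 5) (a 3) (fun j => by
    have := h (2, j)
    rw [tpt2] at this
    simp [cub] at this
    linear_combination this + a 0 * cube_pow ε hε j.val)
  refine ⟨a 0, a 9, ?_⟩
  have k1 : a 1 = a 0 := sub_eq_zero.1 g1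
  have k2 : a 2 = a 0 := (sub_eq_zero.1 f1).symm
  simp only [cub, e2, e3, f2, f3, g2, g3, k1, k2, C_0]
  ring

lemma tpt_zero (ε : ℂ) (hε : IsPrimitiveRoot ε 3) (ij : ZMod 3 × ZMod 3) :
    (tpt ε ij 0) ^ 3 + (tpt ε ij 1) ^ 3 + (tpt ε ij 2) ^ 3 = 0 ∧
    tpt ε ij 0 * tpt ε ij 1 * tpt ε ij 2 = 0 := by
  obtain ⟨i, j⟩ := ij
  have hc := cube_pow ε hε j.val
  have hi : i = 0 ∨ i = 1 ∨ i = 2 := by revert i; decide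
  rcases hi with rfl | rfl | rfl
  · rw [tpt0]; simp; linear_combination -hc
  · rw [tpt1]; simp; linear_combination -hc
  · rw [tpt2]; simp; linear_combination -hc

lemma root_form (ε : ℂ) (hε : IsPrimitiveRoot ε 3) (a b : ℂ) (hb : b ≠ 0)
    (h : a ^ 3 + b ^ 3 = 0) : ∃ j : ZMod 3, a = b * -(ε ^ j.val) := by
  have : (-(a / b)) ^ 3 = 1 := by
    field_simp; linear_combination -h
  obtain ⟨i, hi, he⟩ := hε.eq_pow_of_pow_eq_one this
  refine ⟨(i : ZMod 3), ?_⟩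
  rw [ZMod.val_natCast, Nat.mod_eq_of_lt hi, he]
  field_simp
  

lemma base_form (ε : ℂ) (hε : IsPrimitiveRoot ε 3) (v : Fin 3 → ℂ) (hv : v ≠ 0)
    (h1 : v 0 ^ 3 + v 1 ^ 3 + v 2 ^ 3 = 0) (h2 : v 0 * v 1 * v 2 = 0) :
    ∃ (km : ZMod 3 × ZMod 3) (c : ℂ), c ≠ 0 ∧ v = c • tpt ε km := by
  have key : ¬ (v 0 = 0 ∧ v 1 = 0 ∧ v 2 = 0) := by
    rintro ⟨p, q, r⟩
    apply hv
    ext i; fin_cases i <;> simp [p, q, r]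
  rcases mul_eq_zero.1 h2 with h | h
  · rcases mul_eq_zero.1 h with h | h
    · have hb : v 2 ≠ 0 := fun hb => key ⟨h, by simpa [h, hb] using h1, hb⟩
      obtain ⟨j, hj⟩ := root_form ε hε (v 1) (v 2) hb (by simpa [h] using h1)
      refine ⟨(0, j), v 2, hb, ?_⟩
      rw [tpt0]; ext i; fin_cases i <;> simp [h]; simpa using hj
    · have hb : v 0 ≠ 0 := fun hb => key ⟨hb, h, by simpa [h, hb] using h1⟩
      obtain ⟨j, hj⟩ := root_form ε hε (v 2) (v 0) hb (by simpa [h, add_comm] using h1)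
      refine ⟨(1, j), v 0, hb, ?_⟩
      rw [tpt1]; ext i; fin_cases i <;> simp [h]; simpa using hj
  · have hb : v 1 ≠ 0 := fun hb => key ⟨by simpa [h, hb] using h1, hb, h⟩
    obtain ⟨j, hj⟩ := root_form ε hε (v 0) (v 1) hb (by simpa [h] using h1)
    refine ⟨(2, j), v 1, hb, ?_⟩
    rw [tpt2]; ext i; fin_cases i <;> simp [h]; simpa using hj

lemma tpt_ne (ε : ℂ) (ij : ZMod 3 × ZMod 3) : tpt ε ij ≠ 0 := by
  obtain ⟨i, j⟩ := ij
  have hi : i = 0 ∨ i = 1 ∨ i = 2 := by revert i; decide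
  rcases hi with rfl | rfl | rfl
  · rw [tpt0]; intro h; simpa using congrFun h 2
  · rw [tpt1]; intro h; simpa using congrFun h 0
  · rw [tpt2]; intro h; simpa using congrFun h 1

lemma pencil_vanish (ε : ℂ) (hε : IsPrimitiveRoot ε 3) (ij : ZMod 3 × ZMod 3) (c : ℂ)
    (f : MvPolynomial (Fin 3) ℂ) (hf : f ∈ hessePencil) : eval (c • tpt ε ij) f = 0 := by
  obtain ⟨α, β, rfl⟩ := hf
  obtain ⟨h1, h2⟩ := tpt_zero ε hε ij
  simp only [map_add, map_mul, map_pow, eval_X, eval_C, Pi.smul_apply, smul_eq_mul]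
  linear_combination α * c ^ 3 * h1 + β * c ^ 3 * h2

/-- `g ∈ GL₃(ℂ)` permutes the nine flexes projectively iff the substitution `f ↦ f∘g`
maps the Hesse pencil into itself: `N_{PGL₃}(𝓕) = N_{PGL₃}(ℓ)`. -/
theorem permutes_flexes_iff_preserves_pencil (ε : ℂ) (hε : IsPrimitiveRoot ε 3)
    (g : Matrix.GeneralLinearGroup (Fin 3) ℂ) :
    (∀ ij : ZMod 3 × ZMod 3, ∃ (km : ZMod 3 × ZMod 3) (c : ℂ), c ≠ 0 ∧
        Matrix.mulVec (g : Matrix (Fin 3) (Fin 3) ℂ) (tpt ε ij) = c • tpt ε km) ↔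
      ∀ f ∈ hessePencil, substGL g f ∈ hessePencil := by
  constructor
  · intro h f hf
    obtain ⟨a, ha⟩ := subst_cub g f hf
    rw [ha]
    apply cub_mem ε hε
    intro ij
    obtain ⟨km, c, -, hc⟩ := h ij
    rw [← ha, eval_substGL, hc]
    exact pencil_vanish ε hε km c f hf
  · intro h ij
    have ev : ∀ f ∈ hessePencil,
        eval (Matrix.mulVec (g : Matrix (Fin 3) (Fin 3) ℂ) (tpt ε ij)) f = 0 := by
      intro f hf
      rw [← eval_substGL]
      simpa using pencil_vanish ε hε ij 1 _ (h f hf)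
    apply base_form ε hε
    · intro h0
      apply tpt_ne ε ij
      have hinj : Function.Injective (Matrix.mulVec (g : Matrix (Fin 3) (Fin 3) ℂ)) :=
        Matrix.mulVec_injective_iff_isUnit.2 g.isUnit
      apply hinj
      rw [h0, Matrix.mulVec_zero]
    · simpa using ev _ ⟨1, 0, rfl⟩
    · simpa only [map_add, map_mul, map_pow, eval_X, eval_C, zero_mul, zero_add, one_mul] using
        ev _ ⟨0, 1, rfl⟩
end
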